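/- arXiv:2403.18399 — 2 statements merged into one kernel-verified Lean document; each statement's English description precedes it below -/
import Mathlib

section
/- Let r ≥ 1. There is a unique Lie algebra homomorphism τ : ft(r) → ft(r) satisfying τ(t_{ij}) = t_{ij} for all 2 ≤ i,j ≤ r, τ(t_{1i}) = τ(t_{i1}) = −∑_{k=1}^r t_{ki} for all 2 ≤ i ≤ r, and τ(t_{11}) = ∑_{k,l=1}^r t_{kl}. (This is the cyclic structure map of the cyclic operad ft corresponding to the transposition 0 ↔ 1.) -/
open FreeLieAlgebra

/-- The defining relations of the framed Drinfeld–Kohno Lie algebra `ft(r)`.  Generators are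
indexed by `Fin r × Fin r`, the index `i : Fin r` representing `i+1 ∈ {1,…,r}`. -/
def ftRel (r : ℕ) : Set (FreeLieAlgebra ℚ (Fin r × Fin r)) :=
  { x | (∃ i j : Fin r, x = of ℚ (i, j) - of ℚ (j, i)) ∨
        (∃ i j k l : Fin r, ({i, j} ∩ {k, l} : Set (Fin r)) = ∅ ∧
          x = ⁅of ℚ (i, j), of ℚ (k, l)⁆) ∨
        (∃ i j k : Fin r, x = ⁅of ℚ (i, j), of ℚ (k, i) + of ℚ (k, j)⁆) }

/-- The framed Drinfeld–Kohno Lie algebra `ft(r)`: the quotient of the free Lie algebra over `ℚ`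
on the generators `t_{ij}`, `1 ≤ i,j ≤ r`, by the Lie ideal generated by the relations. -/
abbrev ft (r : ℕ) :=
  FreeLieAlgebra ℚ (Fin r × Fin r) ⧸
    LieSubmodule.lieSpan ℚ (FreeLieAlgebra ℚ (Fin r × Fin r)) (ftRel r)

/-- The image `t_{ij}` in `ft(r)` of the generator indexed by `(i,j)`. -/
noncomputable def tf {r : ℕ} (i j : Fin r) : ft r :=
  LieSubmodule.Quotient.mk
    (N := LieSubmodule.lieSpan ℚ (FreeLieAlgebra ℚ (Fin r × Fin r)) (ftRel r))
    (of ℚ (i, j))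

/-- A family in a Lie algebra satisfying the framed Drinfeld–Kohno relations. -/
structure FtFam {r : ℕ} {L : Type*} [LieRing L] (t : Fin r → Fin r → L) : Prop where
  symm : ∀ i j, t i j = t j i
  disj : ∀ i j k l, i ≠ k → i ≠ l → j ≠ k → j ≠ l → ⁅t i j, t k l⁆ = 0
  tri : ∀ i j k, ⁅t i j, t k i + t k j⁆ = 0

namespace FtFam

variable {r : ℕ} {L : Type*} [LieRing L] [LieAlgebra ℚ L] {t : Fin r → Fin r → L}

theorem lie_flip {x y : L} (h : ⁅x, y⁆ = 0) : ⁅y, x⁆ = 0 := by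
  rw [← lie_skew, h, neg_zero]

theorem diag' (h : FtFam t) (i k : Fin r) : ⁅t i i, t k i⁆ = 0 := by
  have h1 := h.tri i i k
  rw [← two_smul ℚ (t k i), lie_smul] at h1
  exact (smul_eq_zero.mp h1).resolve_left (by norm_num)

theorem diag (h : FtFam t) (i k l : Fin r) : ⁅t i i, t k l⁆ = 0 := by
  by_cases hl : i = l
  · subst hl; exact h.diag' i k
  by_cases hk : i = k
  · subst hk; rw [h.symm i l]; exact h.diag' i l
  exact h.disj i i k l hk hl hk hl

/-- Row sums. -/
def S (t : Fin r → Fin r → L) (i : Fin r) : L := ∑ k, t k i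

theorem diag_S (h : FtFam t) (i k : Fin r) : ⁅t i i, S t k⁆ = 0 := by
  rw [S, lie_sum]
  exact Finset.sum_eq_zero fun l _ => h.diag i l k

theorem lie_S (h : FtFam t) (i j k : Fin r) (hi : i ≠ k) (hj : j ≠ k) : ⁅t i j, S t k⁆ = 0 := by
  by_cases hij : i = j
  · subst hij; exact h.diag_S i k
  have h2 : ⁅t i j, S t k⁆ = ⁅t i j, t k i + t k j⁆ := by
    rw [S, lie_sum, lie_add, h.symm k i, h.symm k j]
    refine Finset.sum_eq_add i j hij ?_ (by simp) (by simp)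
    rintro l - ⟨h1, h2⟩
    exact h.disj i j l k h1.symm hi h2.symm hj
  rw [h2, h.tri]

theorem lie_SS (h : FtFam t) (i j : Fin r) : ⁅t i j, S t i + S t j⁆ = 0 := by
  rw [S, S, ← Finset.sum_add_distrib, lie_sum]
  exact Finset.sum_eq_zero fun l _ => h.tri i j l

theorem lie_tot (h : FtFam t) (i j : Fin r) : ⁅t i j, ∑ k, S t k⁆ = 0 := by
  rw [lie_sum]
  by_cases hij : i = j
  · subst hij; exact Finset.sum_eq_zero fun k _ => h.diag_S i k
  rw [Finset.sum_eq_add i j hij ?_ (by simp) (by simp), ← lie_add, h.lie_SS]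
  rintro l - ⟨h1, h2⟩
  exact h.lie_S i j l h1.symm h2.symm

theorem S_tot (h : FtFam t) (i : Fin r) : ⁅S t i, ∑ k, S t k⁆ = 0 := by
  rw [S, sum_lie]
  exact Finset.sum_eq_zero fun l _ => h.lie_tot l i

theorem S_S (h : FtFam t) (j k : Fin r) : ⁅S t j, S t k - t k j⁆ = 0 := by
  by_cases hjk : j = k
  · subst hjk; rw [lie_sub, lie_self, lie_flip (h.diag_S j j), sub_zero]
  have h1 : ⁅S t j, S t k⁆ = ⁅t k j, S t k⁆ := by
    conv_lhs => rw [S, sum_lie]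
    refine Finset.sum_eq_single k ?_ (by simp)
    intro l _ hl
    exact h.lie_S l j k hl hjk
  have h2 := h.lie_SS k j
  rw [lie_add] at h2
  rw [lie_sub, h1, ← lie_skew (S t j), sub_neg_eq_add, h2]

/-- The transformed family. -/
def tw (z : Fin r) (t : Fin r → Fin r → L) (i j : Fin r) : L :=
  if i = z then (if j = z then ∑ k, S t k else - S t j)
  else (if j = z then - S t i else t i j)

theorem tw_fam (h : FtFam t) (z : Fin r) : FtFam (tw z t) where
  symm i j := by
    unfold tw
    split_ifs <;> simp [h.symm i j]
  disj i j k l h1 h2 h3 h4 := by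
    unfold tw
    split_ifs <;> subst_vars <;> first
      | contradiction
      | exact h.disj i j k l h1 h2 h3 h4
      | (try simp only [neg_lie, lie_neg, neg_eq_zero]
         first
          | exact h.lie_tot _ _
          | exact lie_flip (h.lie_tot _ _)
          | exact h.lie_S _ _ _ (by assumption) (by assumption)
          | exact lie_flip (h.lie_S _ _ _ (Ne.symm (by assumption)) (Ne.symm (by assumption))))
  tri i j k := by
    have e1 : ∀ a b : Fin r, ⁅∑ k, S t k, t a b⁆ = 0 := fun a b => lie_flip (h.lie_tot a b)
    have e2 : ∀ a : Fin r, ⁅∑ k, S t k, S t a⁆ = 0 := fun a => lie_flip (h.S_tot a)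
    unfold tw
    by_cases hi : i = z <;> by_cases hj : j = z <;> by_cases hk : k = z <;>
      simp only [hi, hj, hk, if_true, if_false]
    · simp
    · simp [e2]
    · simp [h.S_tot]
    · have := h.S_S j k
      rw [lie_sub] at this
      simp only [neg_lie, lie_add, lie_neg, neg_add_rev, neg_neg]
      rw [← sub_eq_add_neg, this]
    · simp [h.S_tot]
    · have := h.S_S i k
      rw [lie_sub] at this
      simp only [neg_lie, lie_add, lie_neg, neg_add_rev, neg_neg]
      rw [add_comm, sub_eq_add_neg] at *
      first | exact this | (rw [add_comm]; exact this)
    · have := h.lie_SS i j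
      rw [← neg_add, lie_neg, this, neg_zero]
    · exact h.tri i j k

end FtFam

theorem tf_fam (r : ℕ) : FtFam (tf : Fin r → Fin r → ft r) where
  symm i j := by
    rw [← sub_eq_zero]
    exact LieSubmodule.Quotient.mk_eq_zero'.mpr
      (LieSubmodule.subset_lieSpan (Or.inl ⟨i, j, rfl⟩))
  disj i j k l h1 h2 h3 h4 :=
    LieSubmodule.Quotient.mk_eq_zero'.mpr
      (LieSubmodule.subset_lieSpan (Or.inr (Or.inl ⟨i, j, k, l, by
        ext x
        simp only [Set.mem_inter_iff, Set.mem_insert_iff, Set.mem_singleton_iff,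
          Set.mem_empty_iff_false, iff_false]
        rintro ⟨rfl | rfl, rfl | rfl⟩ <;> contradiction, rfl⟩)))
  tri i j k :=
    LieSubmodule.Quotient.mk_eq_zero'.mpr
      (LieSubmodule.subset_lieSpan (Or.inr (Or.inr ⟨i, j, k, rfl⟩)))

theorem ft_lift {r : ℕ} {L : Type*} [LieRing L] [LieAlgebra ℚ L] (u : Fin r → Fin r → L)
    (hu : FtFam u) : ∃ φ : ft r →ₗ⁅ℚ⁆ L, ∀ i j, φ (tf i j) = u i j := by
  let F : FreeLieAlgebra ℚ (Fin r × Fin r) →ₗ⁅ℚ⁆ L := lift ℚ fun p => u p.1 p.2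
  have hF : ∀ i j, F (of ℚ (i, j)) = u i j := fun i j => by simp [F]
  have hle : LieSubmodule.lieSpan ℚ (FreeLieAlgebra ℚ (Fin r × Fin r)) (ftRel r) ≤ F.ker := by
    rw [LieSubmodule.lieSpan_le]
    rintro x (⟨i, j, rfl⟩ | ⟨i, j, k, l, h, rfl⟩ | ⟨i, j, k, rfl⟩) <;>
      rw [SetLike.mem_coe, LieHom.mem_ker]
    · rw [map_sub, hF, hF, hu.symm, sub_self]
    · rw [LieHom.map_lie, hF, hF]
      have hd : ∀ x, x ∈ ({i, j} : Set (Fin r)) → x ∈ ({k, l} : Set (Fin r)) → False :=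
        fun x h1 h2 => (h ▸ (⟨h1, h2⟩ : x ∈ ({i, j} ∩ {k, l} : Set (Fin r))) :
          x ∈ (∅ : Set (Fin r)))
      refine hu.disj i j k l ?_ ?_ ?_ ?_
      · exact fun e => hd i (by simp) (by simp [e])
      · exact fun e => hd i (by simp) (by simp [e])
      · exact fun e => hd j (by simp) (by simp [e])
      · exact fun e => hd j (by simp) (by simp [e])
    · rw [LieHom.map_lie, map_add, hF, hF, hF, hu.tri]
  let G : ft r →ₗ[ℚ] L := Submodule.liftQ
    (LieSubmodule.lieSpan ℚ (FreeLieAlgebra ℚ (Fin r × Fin r)) (ftRel r)).toSubmodule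
    (F : FreeLieAlgebra ℚ (Fin r × Fin r) →ₗ[ℚ] L) (fun x hx => LieHom.mem_ker.mp (hle hx))
  refine ⟨{ G with map_lie' := ?_ }, fun i j => hF i j⟩
  intro x y
  induction x using Submodule.Quotient.induction_on with | _ x
  induction y using Submodule.Quotient.induction_on with | _ y
  exact LieHom.map_lie F x y

theorem ft_ext {r : ℕ} {L : Type*} [LieRing L] [LieAlgebra ℚ L] (f g : ft r →ₗ⁅ℚ⁆ L)
    (h : ∀ i j, f (tf i j) = g (tf i j)) : f = g := by
  let q : FreeLieAlgebra ℚ (Fin r × Fin r) →ₗ⁅ℚ⁆ ft r :=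
    { (LieSubmodule.lieSpan ℚ (FreeLieAlgebra ℚ (Fin r × Fin r)) (ftRel r)).toSubmodule.mkQ with
      map_lie' := rfl }
  have hq : f.comp q = g.comp q := FreeLieAlgebra.hom_ext fun p => h p.1 p.2
  ext x
  induction x using Submodule.Quotient.induction_on with | _ x
  exact LieHom.congr_fun hq x

/-- For `r ≥ 1` there is a unique Lie algebra homomorphism
`τ : ft(r) → ft(r)` with `τ(t_{ij}) = t_{ij}` for `2 ≤ i,j ≤ r`,
`τ(t_{1i}) = τ(t_{i1}) = −∑_{k=1}^r t_{ki}` for `2 ≤ i ≤ r`, and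
`τ(t_{11}) = ∑_{k,l=1}^r t_{kl}`.  (Here the index `1` is represented by `⟨0, hr⟩ : Fin r`.) -/
theorem exists_unique_cyclic_map (r : ℕ) (hr : 1 ≤ r) :
    ∃! τ : ft r →ₗ⁅ℚ⁆ ft r,
      (∀ i j : Fin r, i ≠ ⟨0, hr⟩ → j ≠ ⟨0, hr⟩ → τ (tf i j) = tf i j) ∧
      (∀ i : Fin r, i ≠ ⟨0, hr⟩ → τ (tf ⟨0, hr⟩ i) = -∑ k : Fin r, tf k i) ∧
      (∀ i : Fin r, i ≠ ⟨0, hr⟩ → τ (tf i ⟨0, hr⟩) = -∑ k : Fin r, tf k i) ∧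
      τ (tf ⟨0, hr⟩ ⟨0, hr⟩) = ∑ k : Fin r, ∑ l : Fin r, tf k l := by
  obtain ⟨φ, hφ⟩ := ft_lift _ ((tf_fam r).tw_fam ⟨0, hr⟩)
  refine ⟨φ, ⟨?_, ?_, ?_, ?_⟩, ?_⟩
  · intro i j hi hj
    simp [hφ, FtFam.tw, hi, hj]
  · intro i hi
    simp [hφ, FtFam.tw, hi, FtFam.S]
  · intro i hi
    simp [hφ, FtFam.tw, hi, FtFam.S]
  · simp only [hφ, FtFam.tw, if_true, FtFam.S]
    exact Finset.sum_comm
  · rintro ψ ⟨h1, h2, h3, h4⟩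
    refine ft_ext _ _ fun i j => ?_
    rw [hφ]
    unfold FtFam.tw
    split_ifs with hi hj hj
    · rw [hi, hj, h4]; exact Finset.sum_comm
    · rw [hi, h2 j hj]; rfl
    · rw [hj, h3 i hi]; rfl
    · exact h1 i j hi hj
end

section
/- Let r ≥ 2. The Lie algebra homomorphism ι : t(r) → ft(r) determined by ι(t_{ij}) = t_{ij} for all i ≠ j is injective. (This realizes the Drinfeld–Kohno Lie algebra t(r) as a Lie subalgebra of ft(r), obtained by dropping the diagonal generators t_{ii}; a left inverse is given by the Lie algebra homomorphism ft(r) → t(r) sending t_{ij} ↦ t_{ij} for i ≠ j and t_{ii} ↦ 0.) -/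
open FreeLieAlgebra

/-- The defining relations of the (non-framed) Drinfeld–Kohno Lie algebra `t(r)`.  Generators
are indexed by pairs `(i,j)` with `i ≠ j`. -/
def tkRel (r : ℕ) : Set (FreeLieAlgebra ℚ {p : Fin r × Fin r // p.1 ≠ p.2}) :=
  { x | (∃ (i j : Fin r) (h : i ≠ j),
          x = of ℚ (⟨(i, j), h⟩ : {p : Fin r × Fin r // p.1 ≠ p.2}) -
              of ℚ (⟨(j, i), h.symm⟩ : {p : Fin r × Fin r // p.1 ≠ p.2})) ∨
        (∃ (i j k l : Fin r) (hij : i ≠ j) (hkl : k ≠ l),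
          ({i, j} ∩ {k, l} : Set (Fin r)) = ∅ ∧
          x = ⁅of ℚ (⟨(i, j), hij⟩ : {p : Fin r × Fin r // p.1 ≠ p.2}),
               of ℚ (⟨(k, l), hkl⟩ : {p : Fin r × Fin r // p.1 ≠ p.2})⁆) ∨
        (∃ (i j k : Fin r) (hij : i ≠ j) (hki : k ≠ i) (hkj : k ≠ j),
          x = ⁅of ℚ (⟨(i, j), hij⟩ : {p : Fin r × Fin r // p.1 ≠ p.2}),
               of ℚ (⟨(k, i), hki⟩ : {p : Fin r × Fin r // p.1 ≠ p.2}) +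
               of ℚ (⟨(k, j), hkj⟩ : {p : Fin r × Fin r // p.1 ≠ p.2})⁆) }

/-- The (non-framed) Drinfeld–Kohno Lie algebra `t(r)`. -/
abbrev tk (r : ℕ) :=
  FreeLieAlgebra ℚ {p : Fin r × Fin r // p.1 ≠ p.2} ⧸
    LieSubmodule.lieSpan ℚ (FreeLieAlgebra ℚ {p : Fin r × Fin r // p.1 ≠ p.2}) (tkRel r)

/-- The image `t_{ij}` (with `i ≠ j`) in `t(r)` of the corresponding generator. -/
noncomputable def tn {r : ℕ} (i j : Fin r) (h : i ≠ j) : tk r :=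
  LieSubmodule.Quotient.mk
    (N := LieSubmodule.lieSpan ℚ (FreeLieAlgebra ℚ {p : Fin r × Fin r // p.1 ≠ p.2}) (tkRel r))
    (of ℚ (⟨(i, j), h⟩ : {p : Fin r × Fin r // p.1 ≠ p.2}))

/-- A Lie algebra homomorphism killing a set `S` factors through the quotient by the Lie ideal
generated by `S`. -/
theorem exists_quot_lift {L L' : Type*} [LieRing L] [LieAlgebra ℚ L] [LieRing L']
    [LieAlgebra ℚ L'] (S : Set L) (f : L →ₗ⁅ℚ⁆ L') (hf : ∀ x ∈ S, f x = 0) :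
    ∃ g : (L ⧸ LieSubmodule.lieSpan ℚ L S) →ₗ⁅ℚ⁆ L',
      ∀ x : L, g (LieSubmodule.Quotient.mk (N := LieSubmodule.lieSpan ℚ L S) x) = f x := by
  have hle : LieSubmodule.lieSpan ℚ L S ≤ f.ker :=
    LieSubmodule.lieSpan_le.2 fun x hx => (LieHom.mem_ker).2 (hf x hx)
  let φ := Submodule.liftQ (LieSubmodule.lieSpan ℚ L S).toSubmodule (f : L →ₗ[ℚ] L')
    (fun x hx => (LieHom.mem_ker).1 (hle hx))
  refine ⟨{ toFun := φ, map_add' := fun x y => φ.map_add x y,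
            map_smul' := fun c x => φ.map_smul c x, map_lie' := ?_ }, fun x => rfl⟩
  intro x y
  obtain ⟨x, rfl⟩ := Submodule.Quotient.mk_surjective _ x
  obtain ⟨y, rfl⟩ := Submodule.Quotient.mk_surjective _ y
  exact f.map_lie x y

/-- The quotient map as a Lie algebra homomorphism. -/
def quotMk {L : Type*} [LieRing L] [LieAlgebra ℚ L] (I : LieIdeal ℚ L) : L →ₗ⁅ℚ⁆ (L ⧸ I) where
  toFun := LieSubmodule.Quotient.mk
  map_add' _ _ := rfl
  map_smul' _ _ := rfl
  map_lie' := rfl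

theorem quot_rel {L : Type*} [LieRing L] [LieAlgebra ℚ L] (S : Set L) (x : L) (hx : x ∈ S) :
    quotMk (LieSubmodule.lieSpan ℚ L S) x = 0 :=
  LieSubmodule.Quotient.mk_eq_zero'.2 (LieSubmodule.subset_lieSpan hx)

theorem tf_symm {r : ℕ} (i j : Fin r) : tf i j - tf j i = 0 := by
  have := quot_rel (ftRel r) _ (Or.inl ⟨i, j, rfl⟩)
  rwa [map_sub] at this

theorem tf_comm {r : ℕ} (i j k l : Fin r) (h : ({i, j} ∩ {k, l} : Set (Fin r)) = ∅) :
    ⁅tf i j, tf k l⁆ = 0 := by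
  have := quot_rel (ftRel r) _ (Or.inr (Or.inl ⟨i, j, k, l, h, rfl⟩))
  rwa [LieHom.map_lie] at this

theorem tf_fourTerm {r : ℕ} (i j k : Fin r) : ⁅tf i j, tf k i + tf k j⁆ = 0 := by
  have := quot_rel (ftRel r) _ (Or.inr (Or.inr ⟨i, j, k, rfl⟩))
  rwa [LieHom.map_lie, map_add] at this

theorem tn_symm {r : ℕ} (i j : Fin r) (h : i ≠ j) : tn i j h - tn j i h.symm = 0 := by
  have := quot_rel (tkRel r) _ (Or.inl ⟨i, j, h, rfl⟩)
  rwa [map_sub] at this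

theorem tn_comm {r : ℕ} (i j k l : Fin r) (hij : i ≠ j) (hkl : k ≠ l)
    (h : ({i, j} ∩ {k, l} : Set (Fin r)) = ∅) : ⁅tn i j hij, tn k l hkl⁆ = 0 := by
  have := quot_rel (tkRel r) _ (Or.inr (Or.inl ⟨i, j, k, l, hij, hkl, h, rfl⟩))
  rwa [LieHom.map_lie] at this

theorem tn_fourTerm {r : ℕ} (i j k : Fin r) (hij : i ≠ j) (hki : k ≠ i) (hkj : k ≠ j) :
    ⁅tn i j hij, tn k i hki + tn k j hkj⁆ = 0 := by
  have := quot_rel (tkRel r) _ (Or.inr (Or.inr ⟨i, j, k, hij, hki, hkj, rfl⟩))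
  rwa [LieHom.map_lie, map_add] at this

/-- Images of the generators of `ft(r)` under the left inverse. -/
noncomputable def retr {r : ℕ} (p : Fin r × Fin r) : tk r :=
  if h : p.1 ≠ p.2 then tn p.1 p.2 h else 0

theorem retr_ne {r : ℕ} {i j : Fin r} (h : i ≠ j) : retr (i, j) = tn i j h := dif_pos h

theorem retr_self {r : ℕ} (i : Fin r) : retr (i, i) = 0 := dif_neg (fun h => h rfl)

theorem retr_symm {r : ℕ} (i j : Fin r) : retr (i, j) = retr (j, i) := by
  by_cases h : i = j
  · rw [h]
  · rw [retr_ne h, retr_ne (Ne.symm h)]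
    exact sub_eq_zero.1 (tn_symm i j h)

/-- For `r ≥ 2` the Lie algebra homomorphism `ι : t(r) → ft(r)` determined
by `ι(t_{ij}) = t_{ij}` for all `i ≠ j` exists and is injective; it realizes `t(r)` as a Lie
subalgebra of `ft(r)`. -/
theorem tk_injects_into_ft (r : ℕ) (hr : 2 ≤ r) :
    ∃ ι : tk r →ₗ⁅ℚ⁆ ft r,
      (∀ (i j : Fin r) (h : i ≠ j), ι (tn i j h) = tf i j) ∧
      Function.Injective ι := by
  obtain ⟨ι, hι⟩ := exists_quot_lift (tkRel r)
    (lift ℚ (fun p : {p : Fin r × Fin r // p.1 ≠ p.2} => tf p.1.1 p.1.2)) (by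
      rintro x (⟨i, j, h, rfl⟩ | ⟨i, j, k, l, hij, hkl, h, rfl⟩ | ⟨i, j, k, hij, hki, hkj, rfl⟩)
      · rw [map_sub, lift_of_apply, lift_of_apply]
        exact tf_symm i j
      · rw [LieHom.map_lie, lift_of_apply, lift_of_apply]
        exact tf_comm i j k l h
      · rw [LieHom.map_lie, map_add, lift_of_apply, lift_of_apply, lift_of_apply]
        exact tf_fourTerm i j k)
  obtain ⟨π, hπ⟩ := exists_quot_lift (ftRel r) (lift ℚ (retr (r := r))) (by
      rintro x (⟨i, j, rfl⟩ | ⟨i, j, k, l, h, rfl⟩ | ⟨i, j, k, rfl⟩)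
      · rw [map_sub, lift_of_apply, lift_of_apply]
        exact sub_eq_zero.2 (retr_symm i j)
      · rw [LieHom.map_lie, lift_of_apply, lift_of_apply]
        by_cases hij : i = j
        · rw [hij, retr_self, zero_lie]
        by_cases hkl : k = l
        · rw [hkl, retr_self, lie_zero]
        rw [retr_ne hij, retr_ne hkl]
        exact tn_comm i j k l hij hkl h
      · rw [LieHom.map_lie, map_add, lift_of_apply, lift_of_apply, lift_of_apply]
        by_cases hij : i = j
        · rw [hij, retr_self, zero_lie]
        by_cases hki : k = i
        · rw [hki, retr_self, zero_add, lie_self]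
        by_cases hkj : k = j
        · rw [hkj, retr_self, add_zero, retr_symm j i, lie_self]
        rw [retr_ne hij, retr_ne hki, retr_ne hkj]
        exact tn_fourTerm i j k hij hki hkj)
  have hιt : ∀ (i j : Fin r) (h : i ≠ j), ι (tn i j h) = tf i j := fun i j h =>
    (hι _).trans (lift_of_apply _ _)
  have hπt : ∀ (i j : Fin r) (h : i ≠ j), π (tf i j) = tn i j h := fun i j h =>
    ((hπ _).trans (lift_of_apply _ _)).trans (retr_ne h)
  refine ⟨ι, hιt, ?_⟩
  have key : (π.comp ι).comp (quotMk (LieSubmodule.lieSpan ℚ _ (tkRel r)))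
      = quotMk (LieSubmodule.lieSpan ℚ _ (tkRel r)) := by
    apply FreeLieAlgebra.hom_ext
    rintro ⟨⟨i, j⟩, h⟩
    change π (ι (tn i j h)) = tn i j h
    rw [hιt, hπt i j h]
  apply Function.LeftInverse.injective (g := π)
  intro x
  obtain ⟨x, rfl⟩ := Submodule.Quotient.mk_surjective _ x
  exact LieHom.congr_fun key x
end
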